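/- arXiv:2502.00461 — 2 statements merged into one kernel-verified Lean document; each statement's English description precedes it below -/
import Mathlib

section
/- Let c : Fin 2 → Fin 2 → Fin 2 → ℂ be a nonzero array (the coefficients of a 3-qubit pure state in ℙ⁷). There exist x, y, w : Fin 2 → ℂ such that c i j k = x i · y j · w k for all i, j, k if and only if both of the following families of 2×2 minor equations hold: (i) for all i, i', j, j', k, k': c i j k · c i' j' k' = c i j' k' · c i' j k (vanishing of the 2×2 minors of the flattening with rows indexed by i and columns by (j,k)), and (ii) for all i, i', j, j', k, k': c i j k · c i' j' k' = c i j k' · c i' j' k (vanishing of the 2×2 minors of the flattening with rows indexed by (i,j) and columns by k). -/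
/-- A nonzero 3-qubit coefficient array `c : Fin 2 → Fin 2 → Fin 2 → ℂ` is a
product state, `c i j k = x i * y j * w k`, iff the `2×2` minors of the two
flattenings `i | (j,k)` and `(i,j) | k` all vanish. -/
theorem three_qubit_separable_iff_segre
    (c : Fin 2 → Fin 2 → Fin 2 → ℂ) (hc : c ≠ 0) :
    (∃ x y w : Fin 2 → ℂ, ∀ i j k, c i j k = x i * y j * w k) ↔
      ((∀ i i' j j' k k' : Fin 2,
          c i j k * c i' j' k' = c i j' k' * c i' j k) ∧
       (∀ i i' j j' k k' : Fin 2,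
          c i j k * c i' j' k' = c i j k' * c i' j' k)) := by
  constructor
  · rintro ⟨x, y, w, h⟩
    constructor
    · intro i i' j j' k k'
      simp only [h]
      ring
    · intro i i' j j' k k'
      simp only [h]
      ring
  · rintro ⟨h1, h2⟩
    have hne : ∃ a b d, c a b d ≠ 0 := by
      by_contra hcon
      push Not at hcon
      apply hc
      funext a b d
      exact hcon a b d
    obtain ⟨a, b, d, hp⟩ := hne
    refine ⟨fun i => c i b d, fun j => c a j d / c a b d, fun k => c a b k / c a b d, ?_⟩
    intro i j k
    have e1 := h1 i a j b k d
    have e2 := h2 a a j b k d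
    have e3 : c i j k * c a b d * c a b d = c i b d * c a j d * c a b k := by
      linear_combination c a b d * e1 + c i b d * e2
    field_simp
    linear_combination e3
end

section
/- Let n ≥ 1 and let c : (Fin n → Fin 2) → ℂ be a nonzero function (the coefficients of an n-qubit pure state in ℙ^{2ⁿ−1}). There exist vectors x : Fin n → (Fin 2 → ℂ) such that c f = ∏_{i ∈ Fin n} x i (f i) for every f : Fin n → Fin 2, if and only if for every index i ∈ Fin n and all f, g : Fin n → Fin 2 one has c f · c g = c (update f i (g i)) · c (update g i (f i)), where update f i b replaces the i-th value of f by b. (These quadratic equations cut out the generalized Segre variety, the image of the n-fold Segre embedding ℙ¹ × ⋯ × ℙ¹ → ℙ^{2ⁿ−1}.) -/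
/-- A nonzero `n`-qubit coefficient function `c : (Fin n → Fin 2) → ℂ` is a product
state, `c f = ∏ i, x i (f i)`, iff for every index `i` and all basis labels `f, g`
one has `c f * c g = c (update f i (g i)) * c (update g i (f i))`.  These quadrics
cut out the generalized Segre variety in `ℙ^{2ⁿ−1}`. -/
theorem n_qubit_separable_iff_segre (n : ℕ) (hn : 1 ≤ n)
    (c : (Fin n → Fin 2) → ℂ) (hc : c ≠ 0) :
    (∃ x : Fin n → Fin 2 → ℂ, ∀ f : Fin n → Fin 2, c f = ∏ i, x i (f i)) ↔
      ∀ (i : Fin n) (f g : Fin n → Fin 2),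
        c f * c g = c (Function.update f i (g i)) * c (Function.update g i (f i)) := by
  constructor
  · rintro ⟨x, hx⟩ i f g
    simp only [hx, ← Finset.prod_mul_distrib]
    refine Finset.prod_congr rfl fun j _ => ?_
    by_cases h : j = i
    · subst h
      simp [mul_comm]
    · simp [Function.update_of_ne h]
  · intro H
    obtain ⟨g, hg⟩ := Function.ne_iff.mp hc
    have hg : c g ≠ 0 := hg
    have key : ∀ (f : Fin n → Fin 2) (S : Finset (Fin n)),
        c (S.piecewise f g) = c g * ∏ i ∈ S, (c (Function.update g i (f i)) / c g) := by
      intro f S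
      induction S using Finset.induction_on with
      | empty => simp
      | insert i S hi ih =>
        have h := H i ((insert i S).piecewise f g) g
        have h1 : Function.update ((insert i S).piecewise f g) i (g i) = S.piecewise f g := by
          rw [Finset.piecewise_insert, Function.update_idem]
          apply Function.update_eq_iff.mpr
          simp [hi]
        have h2 : (insert i S).piecewise f g i = f i := by simp
        rw [h1, h2, ih] at h
        rw [Finset.prod_insert hi, eq_div_of_mul_eq hg h]
        field_simp
    refine ⟨fun i b => (if i = ⟨0, hn⟩ then c g else 1) * (c (Function.update g i b) / c g), ?_⟩
    intro f
    have h := key f Finset.univ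
    rw [Finset.piecewise_univ] at h
    rw [h, Finset.prod_mul_distrib, Finset.prod_ite_eq' Finset.univ]
    simp
end
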